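/- Let c, d, M : [0, π] × [0, 2π] → ℝ be smooth functions satisfying Condition A and Condition B, and set l := ∂_θ c + 2c cot θ + (∂_ψ d) csc θ and l̄ := ∂_θ d + 2d cot θ − (∂_ψ c) csc θ on (0, π) × [0, 2π]. Then, with all integrals understood as iterated integrals (integrating in ψ first), ∫₀^π ∫₀^{2π} [4M sin θ cos ψ − (∂_θ M) cos θ cos ψ + (∂_ψ M) csc θ sin ψ − (∂_θ l) sin θ cos ψ − (∂_ψ l̄) cos ψ − 2l cos θ cos ψ + l̄ sin ψ] sin θ dψ dθ = 2 ∫₀^π ∫₀^{2π} M sin²θ cos ψ dψ dθ. -/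

import Mathlib

/-!
With `s = sin θ` and `C = cos θ`, the integrand is, at every `θ` with `s ≠ 0`,

  `-∂_θ H + ∂_ψ K + 2 M s² cos ψ`,

where `H = (M C s + s² ∂_θ c + 2 s C c + s ∂_ψ d) cos ψ = (M C s + s² l) cos ψ` and
`K = M sin ψ - l̄ s cos ψ`. The `ψ`-integral of `∂_ψ K` vanishes by periodicity
(`inner_integral`). The first expression for `H` has no singular coefficients, so `H` is smooth on
the whole plane and vanishes at `θ = 0` and `θ = π`. Hence, after exchanging the order of
integration, the integral of `∂_θ H` vanishes as well (`integral_pd₁_eq_zero`).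
No boundary term in `c` survives, because `s² l` tends to `0` at both poles.
-/

open Real MeasureTheory

/-- Partial derivative in the first (θ) variable. -/
noncomputable def pd₁ (f : ℝ → ℝ → ℝ) (θ ψ : ℝ) : ℝ := deriv (fun t => f t ψ) θ

/-- Partial derivative in the second (ψ) variable. -/
noncomputable def pd₂ (f : ℝ → ℝ → ℝ) (θ ψ : ℝ) : ℝ := deriv (fun t => f θ t) ψ

/-- Condition A: `f` together with its derivatives up to second order takes equal
values at `ψ = 0` and `ψ = 2π`. -/
def CondA (f : ℝ → ℝ → ℝ) : Prop :=
  ∀ θ : ℝ, f θ 0 = f θ (2 * π) ∧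
    pd₁ f θ 0 = pd₁ f θ (2 * π) ∧ pd₂ f θ 0 = pd₂ f θ (2 * π) ∧
    pd₁ (pd₁ f) θ 0 = pd₁ (pd₁ f) θ (2 * π) ∧
    pd₂ (pd₁ f) θ 0 = pd₂ (pd₁ f) θ (2 * π) ∧
    pd₂ (pd₂ f) θ 0 = pd₂ (pd₂ f) θ (2 * π)

/-- `l = c_{,2} + 2c cot θ + d_{,3} csc θ`. -/
noncomputable def lfun (c d : ℝ → ℝ → ℝ) (θ ψ : ℝ) : ℝ :=
  pd₁ c θ ψ + 2 * c θ ψ * (cos θ / sin θ) + pd₂ d θ ψ * (sin θ)⁻¹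

/-- `l̄ = d_{,2} + 2d cot θ - c_{,3} csc θ`. -/
noncomputable def lbar (c d : ℝ → ℝ → ℝ) (θ ψ : ℝ) : ℝ :=
  pd₁ d θ ψ + 2 * d θ ψ * (cos θ / sin θ) - pd₂ c θ ψ * (sin θ)⁻¹

/-- Joint smoothness of a function of `(θ, ψ)` given in curried form. -/
def Smooth₂ (f : ℝ → ℝ → ℝ) : Prop := ContDiff ℝ (⊤ : ℕ∞) (fun p : ℝ × ℝ => f p.1 p.2)

namespace Smooth₂

variable {f : ℝ → ℝ → ℝ}

lemma differentiable (hf : Smooth₂ f) : Differentiable ℝ (fun p : ℝ × ℝ => f p.1 p.2) :=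
  ContDiff.differentiable hf (by simp)

lemma hasDerivAt_fderiv₁ (hf : Smooth₂ f) (θ ψ : ℝ) :
    HasDerivAt (fun t => f t ψ) (fderiv ℝ (fun p : ℝ × ℝ => f p.1 p.2) (θ, ψ) (1, 0)) θ :=
  HasFDerivAt.comp_hasDerivAt (l := fun p : ℝ × ℝ => f p.1 p.2) (f := fun t => (t, ψ)) θ
    ((hf.differentiable (θ, ψ)).hasFDerivAt) ((hasDerivAt_id θ).prodMk (hasDerivAt_const θ ψ))

lemma hasDerivAt_fderiv₂ (hf : Smooth₂ f) (θ ψ : ℝ) :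
    HasDerivAt (fun t => f θ t) (fderiv ℝ (fun p : ℝ × ℝ => f p.1 p.2) (θ, ψ) (0, 1)) ψ :=
  HasFDerivAt.comp_hasDerivAt (l := fun p : ℝ × ℝ => f p.1 p.2) (f := fun t => (θ, t)) ψ
    ((hf.differentiable (θ, ψ)).hasFDerivAt) ((hasDerivAt_const ψ θ).prodMk (hasDerivAt_id ψ))

lemma hasDerivAt₁ (hf : Smooth₂ f) (θ ψ : ℝ) : HasDerivAt (fun t => f t ψ) (pd₁ f θ ψ) θ :=
  (hf.hasDerivAt_fderiv₁ θ ψ).differentiableAt.hasDerivAt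

lemma hasDerivAt₂ (hf : Smooth₂ f) (θ ψ : ℝ) : HasDerivAt (fun t => f θ t) (pd₂ f θ ψ) ψ :=
  (hf.hasDerivAt_fderiv₂ θ ψ).differentiableAt.hasDerivAt

lemma pd₁ (hf : Smooth₂ f) : Smooth₂ (pd₁ f) := by
  have h : ContDiff ℝ (⊤ : ℕ∞)
      (fun p : ℝ × ℝ => fderiv ℝ (fun p : ℝ × ℝ => f p.1 p.2) p (1, 0)) :=
    (ContDiff.fderiv_right hf (by simp)).clm_apply contDiff_const
  have e : (fun p : ℝ × ℝ => _root_.pd₁ f p.1 p.2)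
      = fun p : ℝ × ℝ => fderiv ℝ (fun p : ℝ × ℝ => f p.1 p.2) p (1, 0) :=
    funext fun p => (hf.hasDerivAt_fderiv₁ p.1 p.2).deriv
  unfold Smooth₂
  rwa [e]

lemma pd₂ (hf : Smooth₂ f) : Smooth₂ (pd₂ f) := by
  have h : ContDiff ℝ (⊤ : ℕ∞)
      (fun p : ℝ × ℝ => fderiv ℝ (fun p : ℝ × ℝ => f p.1 p.2) p (0, 1)) :=
    (ContDiff.fderiv_right hf (by simp)).clm_apply contDiff_const
  have e : (fun p : ℝ × ℝ => _root_.pd₂ f p.1 p.2)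
      = fun p : ℝ × ℝ => fderiv ℝ (fun p : ℝ × ℝ => f p.1 p.2) p (0, 1) :=
    funext fun p => (hf.hasDerivAt_fderiv₂ p.1 p.2).deriv
  unfold Smooth₂
  rwa [e]

lemma continuous_right (hf : Smooth₂ f) (θ : ℝ) : Continuous (fun ψ => f θ ψ) :=
  (ContDiff.continuous hf).comp (Continuous.prodMk_right θ)

lemma continuous_left (hf : Smooth₂ f) (ψ : ℝ) : Continuous (fun θ => f θ ψ) :=
  (ContDiff.continuous hf).comp (Continuous.prodMk_left ψ)

/-- A total `θ`-derivative integrates to zero if its primitive vanishes at both ends: exchange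
the order of integration and apply the fundamental theorem of calculus in `θ`. -/
lemma integral_pd₁_eq_zero {H : ℝ → ℝ → ℝ} (hH : Smooth₂ H) {a b u v : ℝ}
    (ha : ∀ ψ, H a ψ = 0) (hb : ∀ ψ, H b ψ = 0) :
    (∫ θ in a..b, ∫ ψ in u..v, _root_.pd₁ H θ ψ) = 0 := by
  have hcont : Continuous (Function.uncurry (_root_.pd₁ H)) := ContDiff.continuous hH.pd₁
  rw [intervalIntegral_intervalIntegral_swap]
  · have h : ∀ ψ, (∫ θ in a..b, _root_.pd₁ H θ ψ) = 0 := fun ψ => by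
      rw [intervalIntegral.integral_eq_sub_of_hasDerivAt
        (fun θ _ => hH.hasDerivAt₁ θ ψ) ((hH.pd₁.continuous_left ψ).intervalIntegrable _ _),
        ha, hb, sub_zero]
    simp [h]
  · exact (hcont.continuousOn.integrableOn_compact
      (isCompact_uIcc.prod isCompact_uIcc)).mono_set
      (Set.prod_mono Set.uIoc_subset_uIcc Set.uIoc_subset_uIcc)

end Smooth₂

/-- The `θ`-primitive `(M sin θ cos θ + sin² θ · l) cos ψ`, with `sin² θ · l` expanded so that no
negative power of `sin θ` occurs. -/
noncomputable def fluxθ (c d M : ℝ → ℝ → ℝ) (θ ψ : ℝ) : ℝ :=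
  (M θ ψ * cos θ * sin θ + sin θ ^ 2 * pd₁ c θ ψ + 2 * sin θ * cos θ * c θ ψ
    + sin θ * pd₂ d θ ψ) * cos ψ

/-- The `ψ`-primitive `M sin ψ - l̄ sin θ cos ψ`. -/
noncomputable def fluxψ (c d M : ℝ → ℝ → ℝ) (θ ψ : ℝ) : ℝ :=
  M θ ψ * sin ψ - lbar c d θ ψ * sin θ * cos ψ

section

variable {c d M : ℝ → ℝ → ℝ}

lemma smooth_fluxθ (hc : Smooth₂ c) (hd : Smooth₂ d) (hM : Smooth₂ M) :
    Smooth₂ (fluxθ c d M) := by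
  have h1 := hc.pd₁
  have h2 := hd.pd₂
  unfold Smooth₂ at *
  unfold fluxθ
  have hs : ContDiff ℝ (⊤ : ℕ∞) (fun p : ℝ × ℝ => sin p.1) := contDiff_fst.sin
  have hC : ContDiff ℝ (⊤ : ℕ∞) (fun p : ℝ × ℝ => cos p.1) := contDiff_fst.cos
  have hC2 : ContDiff ℝ (⊤ : ℕ∞) (fun p : ℝ × ℝ => cos p.2) := contDiff_snd.cos
  exact (((((hM.mul hC).mul hs).add ((hs.pow 2).mul h1)).add
    (((contDiff_const.mul hs).mul hC).mul hc)).add (hs.mul h2)).mul hC2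

lemma pd₁_fluxθ (hc : Smooth₂ c) (hd : Smooth₂ d) (hM : Smooth₂ M) (θ ψ : ℝ) :
    pd₁ (fluxθ c d M) θ ψ =
      (pd₁ M θ ψ * cos θ * sin θ + M θ ψ * (cos θ ^ 2 - sin θ ^ 2)
        + 2 * sin θ * cos θ * pd₁ c θ ψ + sin θ ^ 2 * pd₁ (pd₁ c) θ ψ
        + 2 * (cos θ ^ 2 - sin θ ^ 2) * c θ ψ + 2 * sin θ * cos θ * pd₁ c θ ψ
        + cos θ * pd₂ d θ ψ + sin θ * pd₁ (pd₂ d) θ ψ) * cos ψ := by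
  have hs := hasDerivAt_sin θ
  have hC := hasDerivAt_cos θ
  have h := ((((((hM.hasDerivAt₁ θ ψ).mul hC).mul hs).add
    ((hs.pow 2).mul (hc.pd₁.hasDerivAt₁ θ ψ))).add
    (((hs.const_mul 2).mul hC).mul (hc.hasDerivAt₁ θ ψ))).add
    (hs.mul (hd.pd₂.hasDerivAt₁ θ ψ))).mul_const (cos ψ)
  refine h.deriv.trans ?_
  simp only [Pi.mul_apply, Pi.pow_apply]
  push_cast
  ring

lemma pd₁_lfun (hc : Smooth₂ c) (hd : Smooth₂ d) {θ : ℝ} (hθ : sin θ ≠ 0) (ψ : ℝ) :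
    pd₁ (lfun c d) θ ψ =
      pd₁ (pd₁ c) θ ψ + (2 * pd₁ c θ ψ * (cos θ / sin θ)
        + 2 * c θ ψ * ((-sin θ * sin θ - cos θ * cos θ) / sin θ ^ 2))
        + (pd₁ (pd₂ d) θ ψ * (sin θ)⁻¹ + pd₂ d θ ψ * (-cos θ / sin θ ^ 2)) := by
  have hs := hasDerivAt_sin θ
  have hC := hasDerivAt_cos θ
  exact (((hc.pd₁.hasDerivAt₁ θ ψ).add
    (((hc.hasDerivAt₁ θ ψ).const_mul 2).mul (hC.div hs hθ))).add
    ((hd.pd₂.hasDerivAt₁ θ ψ).mul (hs.inv hθ))).deriv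

lemma hasDerivAt_lbar (hc : Smooth₂ c) (hd : Smooth₂ d) (θ ψ : ℝ) :
    HasDerivAt (fun t => lbar c d θ t)
      (pd₂ (pd₁ d) θ ψ + 2 * pd₂ d θ ψ * (cos θ / sin θ) - pd₂ (pd₂ c) θ ψ * (sin θ)⁻¹) ψ :=
  ((hd.pd₁.hasDerivAt₂ θ ψ).add
    (((hd.hasDerivAt₂ θ ψ).const_mul 2).mul_const (cos θ / sin θ))).sub
    ((hc.pd₂.hasDerivAt₂ θ ψ).mul_const (sin θ)⁻¹)

lemma hasDerivAt_fluxψ (hc : Smooth₂ c) (hd : Smooth₂ d) (hM : Smooth₂ M) (θ ψ : ℝ) :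
    HasDerivAt (fun t => fluxψ c d M θ t)
      (pd₂ M θ ψ * sin ψ + M θ ψ * cos ψ
        - (pd₂ (lbar c d) θ ψ * sin θ * cos ψ + lbar c d θ ψ * sin θ * -sin ψ)) ψ :=
  ((hM.hasDerivAt₂ θ ψ).mul (hasDerivAt_sin ψ)).sub
    (((hasDerivAt_lbar hc hd θ ψ).differentiableAt.hasDerivAt.mul_const (sin θ)).mul
      (hasDerivAt_cos ψ))

lemma continuous_deriv_fluxψ (hc : Smooth₂ c) (hd : Smooth₂ d) (hM : Smooth₂ M) (θ : ℝ) :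
    Continuous (fun ψ => pd₂ M θ ψ * sin ψ + M θ ψ * cos ψ
        - (pd₂ (lbar c d) θ ψ * sin θ * cos ψ + lbar c d θ ψ * sin θ * -sin ψ)) := by
  have e : (fun ψ => pd₂ (lbar c d) θ ψ) = _ :=
    funext fun ψ => (hasDerivAt_lbar hc hd θ ψ).deriv
  have h1 := hM.continuous_right θ
  have h2 := hM.pd₂.continuous_right θ
  have h3 := hd.pd₁.pd₂.continuous_right θ
  have h4 := hd.pd₂.continuous_right θ
  have h5 := hc.pd₂.pd₂.continuous_right θ
  have h6 : Continuous (fun ψ => lbar c d θ ψ) :=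
    continuous_iff_continuousAt.2 fun ψ => (hasDerivAt_lbar hc hd θ ψ).continuousAt
  have h7 : Continuous (fun ψ => pd₂ (lbar c d) θ ψ) := by
    rw [e]
    fun_prop
  fun_prop

/-- Periodicity in `ψ` makes the `∂_ψ` part of the integrand integrate to zero, leaving the
`∂_θ` part and the `M` term. -/
lemma inner_integral (hc : Smooth₂ c) (hd : Smooth₂ d) (hM : Smooth₂ M)
    (hAc : CondA c) (hAd : CondA d) {θ : ℝ} (hθ : sin θ ≠ 0) :
    (∫ ψ in (0:ℝ)..(2 * π),
      (4 * M θ ψ * sin θ * cos ψ - pd₁ M θ ψ * cos θ * cos ψ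
        + pd₂ M θ ψ * (sin θ)⁻¹ * sin ψ
        - pd₁ (lfun c d) θ ψ * sin θ * cos ψ - pd₂ (lbar c d) θ ψ * cos ψ
        - 2 * lfun c d θ ψ * cos θ * cos ψ + lbar c d θ ψ * sin ψ) * sin θ)
    = 2 * (∫ ψ in (0:ℝ)..(2 * π), M θ ψ * sin θ ^ 2 * cos ψ)
      - ∫ ψ in (0:ℝ)..(2 * π), pd₁ (fluxθ c d M) θ ψ := by
  have hper : fluxψ c d M θ (2 * π) - fluxψ c d M θ 0 = 0 := by
    obtain ⟨-, -, hc2, -⟩ := hAc θ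
    obtain ⟨hd0, hd1, -⟩ := hAd θ
    simp [fluxψ, lbar, hc2, hd0, hd1]
  have hψint := (continuous_deriv_fluxψ hc hd hM θ).intervalIntegrable (μ := volume) 0 (2 * π)
  have hψ := intervalIntegral.integral_eq_sub_of_hasDerivAt
    (fun ψ _ => hasDerivAt_fluxψ hc hd hM θ ψ) hψint
  rw [hper] at hψ
  have hMint : IntervalIntegrable (fun ψ => 2 * (M θ ψ * sin θ ^ 2 * cos ψ)) volume 0 (2 * π) := by
    have := hM.continuous_right θ
    exact Continuous.intervalIntegrable (by fun_prop) _ _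
  have hθint := ((smooth_fluxθ hc hd hM).pd₁.continuous_right θ).intervalIntegrable
    (μ := volume) 0 (2 * π)
  have hadd := intervalIntegral.integral_add (hMint.sub hθint) hψint
  rw [hψ, add_zero] at hadd
  rw [← intervalIntegral.integral_const_mul, ← intervalIntegral.integral_sub hMint hθint, ← hadd]
  refine intervalIntegral.integral_congr fun ψ _ => ?_
  simp only [pd₁_fluxθ hc hd hM, pd₁_lfun hc hd hθ, lfun]
  field_simp
  linear_combination (M θ ψ * cos ψ) * sin_sq_add_cos_sq θ

end

/-- Integration-by-parts identity reducing the ADM momentum integrand `𝕂₁` to the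
Bondi momentum aspect `M n¹` plus news correction terms. -/
theorem integration_by_parts_K1
    (c d M : ℝ → ℝ → ℝ)
    (hc : ContDiff ℝ (⊤ : ℕ∞) (fun p : ℝ × ℝ => c p.1 p.2))
    (hd : ContDiff ℝ (⊤ : ℕ∞) (fun p : ℝ × ℝ => d p.1 p.2))
    (hM : ContDiff ℝ (⊤ : ℕ∞) (fun p : ℝ × ℝ => M p.1 p.2))
    (hAc : CondA c) (hAd : CondA d) (hAM : CondA M)
    (hB0 : (∫ ψ in (0:ℝ)..(2 * π), c 0 ψ) = 0)
    (hBπ : (∫ ψ in (0:ℝ)..(2 * π), c π ψ) = 0) :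
    (∫ θ in (0:ℝ)..π, ∫ ψ in (0:ℝ)..(2 * π),
      (4 * M θ ψ * sin θ * cos ψ - pd₁ M θ ψ * cos θ * cos ψ
        + pd₂ M θ ψ * (sin θ)⁻¹ * sin ψ
        - pd₁ (lfun c d) θ ψ * sin θ * cos ψ - pd₂ (lbar c d) θ ψ * cos ψ
        - 2 * lfun c d θ ψ * cos θ * cos ψ + lbar c d θ ψ * sin ψ) * sin θ)
    = 2 * ∫ θ in (0:ℝ)..π, ∫ ψ in (0:ℝ)..(2 * π), M θ ψ * sin θ ^ 2 * cos ψ := by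
  have hH : Smooth₂ (fluxθ c d M) := smooth_fluxθ hc hd hM
  have hMcont : Continuous (Function.uncurry fun θ ψ : ℝ => M θ ψ * sin θ ^ 2 * cos ψ) := by
    have := hM.continuous
    unfold Function.uncurry
    fun_prop
  have hI1 : IntervalIntegrable
      (fun θ => 2 * ∫ ψ in (0:ℝ)..(2 * π), M θ ψ * sin θ ^ 2 * cos ψ) volume 0 π :=
    (continuous_const.mul (intervalIntegral.continuous_parametric_intervalIntegral_of_continuous'
      hMcont 0 (2 * π))).intervalIntegrable _ _
  have hI2 : IntervalIntegrable
      (fun θ => ∫ ψ in (0:ℝ)..(2 * π), pd₁ (fluxθ c d M) θ ψ) volume 0 π :=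
    (intervalIntegral.continuous_parametric_intervalIntegral_of_continuous'
      (ContDiff.continuous hH.pd₁) 0 (2 * π)).intervalIntegrable _ _
  have key := intervalIntegral.integral_sub hI1 hI2
  rw [hH.integral_pd₁_eq_zero (by simp [fluxθ]) (by simp [fluxθ]), sub_zero,
    intervalIntegral.integral_const_mul] at key
  rw [← key]
  -- The inner integrals agree except possibly at the poles, a null set.
  refine intervalIntegral.integral_congr_ae ?_
  filter_upwards [Measure.ae_ne volume π] with θ hθπ hθ
  rw [Set.uIoc_of_le pi_pos.le] at hθ
  exact inner_integral hc hd hM hAc hAd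
    (sin_pos_of_pos_of_lt_pi hθ.1 (lt_of_le_of_ne hθ.2 hθπ)).ne'
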